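/- arXiv:math/0701149 — 2 statements merged into one kernel-verified Lean document; each statement's English description precedes it below -/
import Mathlib

section
/- If n is a positive integer all of whose nontrivial decompositions are even, then n has at most one nontrivial decomposition. -/
/-- `IsDecomp n a m` means the `m` consecutive positive integers
`a+1, a+2, …, a+m` form a decomposition of `n`. -/
def IsDecomp (n a m : ℕ) : Prop :=
  1 ≤ m ∧ (Finset.range m).sum (fun i => a + i + 1) = n

/-- IsDecomp in closed form. -/
theorem isDecomp_iff_aux (n a m : ℕ) : IsDecomp n a m ↔ 1 ≤ m ∧ m * (2 * a + m + 1) = 2 * n := by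
  have key : ∀ m : ℕ, 2 * (Finset.range m).sum (fun i => a + i + 1) = m * (2 * a + m + 1) := by
    intro m
    induction m with
    | zero => simp
    | succ k ih => rw [Finset.sum_range_succ, mul_add, ih]; ring
  unfold IsDecomp
  have := key m
  constructor
  · rintro ⟨h1, h2⟩
    exact ⟨h1, by rw [← this, h2]⟩
  · rintro ⟨h1, h2⟩
    exact ⟨h1, by omega⟩

theorem odd_dvd_aux (n : ℕ)
    (h : ∀ a m : ℕ, IsDecomp n a m → m ≠ 1 → Even m) (a m e : ℕ)
    (hd : IsDecomp n a m) (hm : Even m) (he : Odd e) (hem : e ∣ m) : e = 1 := by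
  by_contra hne
  obtain ⟨h1, h2⟩ := (isDecomp_iff_aux n a m).1 hd
  obtain ⟨c, rfl⟩ := hem
  have hc : Even c := by
    rcases Nat.even_mul.1 hm with h' | h'
    · exact absurd he (Nat.not_odd_iff_even.2 h')
    · exact h'
  have hc0 : 0 < c := Nat.pos_of_ne_zero (by rintro rfl; simp at h1)
  have he0 : 0 < e := he.pos
  obtain ⟨j, rfl⟩ := hc
  obtain ⟨i, rfl⟩ := he
  have hle : 2 * i + 1 + 1 ≤ (j + j) * (2 * a + (2 * i + 1) * (j + j) + 1) := by
    have h3 : 2 * i + 1 ≤ (2 * i + 1) * (j + j) := Nat.le_mul_of_pos_right _ hc0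
    have h4 := Nat.le_mul_of_pos_left (2 * a + (2 * i + 1) * (j + j) + 1) hc0
    omega
  obtain ⟨b, hb⟩ : ∃ b, (j + j) * (2 * a + (2 * i + 1) * (j + j) + 1) = 2 * b + (2 * i + 1) + 1 := by
    have : (j + j) * (2 * a + (2 * i + 1) * (j + j) + 1)
        = 2 * (j * (2 * a + (2 * i + 1) * (j + j) + 1)) := by ring
    rw [this] at hle ⊢
    exact ⟨j * (2 * a + (2 * i + 1) * (j + j) + 1) - i - 1, by omega⟩
  have := h b (2 * i + 1) ((isDecomp_iff_aux _ _ _).2 ⟨he0, by rw [← hb, ← mul_assoc, h2]⟩) hne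
  rw [Nat.even_iff] at this
  omega

theorem dvd_aux (n : ℕ)
    (h : ∀ a m : ℕ, IsDecomp n a m → m ≠ 1 → Even m) (a m b l : ℕ)
    (hd : IsDecomp n a m) (hm : Even m) (hd' : IsDecomp n b l) (hl : Even l) : m ∣ l := by
  have ho : Odd (2 * b + l + 1) := by
    obtain ⟨j, rfl⟩ := hl
    exact ⟨b + j, by ring⟩
  have hco : Nat.Coprime m (2 * b + l + 1) :=
    odd_dvd_aux n h a m _ hd hm (ho.of_dvd_nat (Nat.gcd_dvd_right _ _)) (Nat.gcd_dvd_left _ _)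
  apply hco.dvd_of_dvd_mul_right
  rw [((isDecomp_iff_aux _ _ _).1 hd').2, ← ((isDecomp_iff_aux _ _ _).1 hd).2]
  exact dvd_mul_right _ _

/-- If `n` is a positive integer all of whose nontrivial decompositions are
even, then `n` has at most one nontrivial decomposition. -/
theorem at_most_one_nontrivial_decomposition (n : ℕ) (hn : 0 < n)
    (h : ∀ a m : ℕ, IsDecomp n a m → m ≠ 1 → Even m) :
    {p : ℕ × ℕ | IsDecomp n p.1 p.2 ∧ p.2 ≠ 1}.Subsingleton := by
  rintro ⟨a, m⟩ ⟨hd, hm⟩ ⟨b, l⟩ ⟨hd', hl⟩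
  simp only at hd hm hd' hl
  have e1 := h _ _ hd hm
  have e2 := h _ _ hd' hl
  obtain rfl : m = l := Nat.dvd_antisymm (dvd_aux n h a m b l hd e1 hd' e2)
    (dvd_aux n h b l a m hd' e2 hd e1)
  obtain ⟨h1, h2⟩ := (isDecomp_iff_aux _ _ _).1 hd
  obtain ⟨_, h3⟩ := (isDecomp_iff_aux _ _ _).1 hd'
  have := Nat.eq_of_mul_eq_mul_left h1 (h2.trans h3.symm)
  obtain rfl : a = b := by omega
  rfl
end

section
/- Let n be a positive integer, let K be the set of odd divisors k of n with k^2 < 2n, and suppose n has an odd divisor whose square exceeds 2n; let k₀ be the smallest such divisor. Then the largest element of Lspec(n) (i.e., the length of the longest decomposition of n) is max(max K, 2n/k₀). If no odd divisor of n has square exceeding 2n, then the largest element of Lspec(n) is max K. -/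
/-- The length spectrum of `n`: the set of lengths of decompositions of `n`. -/
def Lspec (n : ℕ) : Set ℕ := {m | ∃ a, IsDecomp n a m}

theorem aux_sum (a m : ℕ) :
    2 * (Finset.range m).sum (fun i => a + i + 1) = m * (2 * a + m + 1) := by
  induction m with
  | zero => simp
  | succ k ih => rw [Finset.sum_range_succ, mul_add, ih]; ring

theorem aux_mem (n m : ℕ) :
    m ∈ Lspec n ↔ ∃ a, 1 ≤ m ∧ m * (2 * a + m + 1) = 2 * n := by
  constructor
  · rintro ⟨a, h1, h2⟩
    exact ⟨a, h1, by rw [← aux_sum, h2]⟩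
  · rintro ⟨a, h1, h2⟩
    refine ⟨a, h1, ?_⟩
    rw [← aux_sum] at h2
    omega

theorem aux_odd (n M : ℕ) (h1 : M ∣ n) (h2 : Odd M) (h3 : M ^ 2 < 2 * n) : M ∈ Lspec n := by
  obtain ⟨c, rfl⟩ := h1
  obtain ⟨t, ht⟩ := h2
  have h4 : M < 2 * c := by
    by_contra h
    push Not at h
    nlinarith [Nat.mul_le_mul_left M h]
  rw [aux_mem]
  refine ⟨c - t - 1, by omega, ?_⟩
  have : 2 * (c - t - 1) + M + 1 = 2 * c := by omega
  rw [this]; ring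

theorem aux_even (n k : ℕ) (hn : 0 < n) (h1 : k ∣ n) (h2 : Odd k) (h3 : 2 * n < k ^ 2) :
    2 * n / k ∈ Lspec n := by
  obtain ⟨c, rfl⟩ := h1
  obtain ⟨t, ht⟩ := h2
  have hk : 0 < k := by omega
  have hc : 0 < c := Nat.pos_of_mul_pos_left hn
  have h4 : 2 * c < k := by
    by_contra h
    push Not at h
    nlinarith [Nat.mul_le_mul_left k h]
  have h5 : 2 * (k * c) / k = 2 * c := by
    rw [show 2 * (k * c) = k * (2 * c) by ring]
    exact Nat.mul_div_cancel_left _ hk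
  rw [h5, aux_mem]
  refine ⟨t - c, by omega, ?_⟩
  have : 2 * (t - c) + 2 * c + 1 = k := by omega
  rw [this]; ring

theorem aux_cases (n m : ℕ) (hm : m ∈ Lspec n) :
    (m ∣ n ∧ Odd m ∧ m ^ 2 < 2 * n) ∨
      ∃ q, (q ∣ n ∧ Odd q ∧ 2 * n < q ^ 2) ∧ m * q = 2 * n := by
  rw [aux_mem] at hm
  obtain ⟨a, h1, h2⟩ := hm
  rcases Nat.even_or_odd m with he | ho
  · right
    have hq : Odd (2 * a + m + 1) := by
      obtain ⟨r, hr⟩ := he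
      exact ⟨a + r, by omega⟩
    refine ⟨2 * a + m + 1, ⟨?_, hq, ?_⟩, h2⟩
    · exact (Nat.coprime_two_right.mpr hq).dvd_of_dvd_mul_left ⟨m, by rw [← h2]; ring⟩
    · rw [← h2]; nlinarith
  · left
    refine ⟨?_, ho, ?_⟩
    · exact (Nat.coprime_two_right.mpr ho).dvd_of_dvd_mul_left ⟨_, h2.symm⟩
    · rw [← h2]; nlinarith

/-- Let `n` be a positive integer and `K` the set of odd divisors `k` of `n`
with `k² < 2n`. If `n` has an odd divisor whose square exceeds `2n`, and `k₀`
is the smallest such divisor, then the largest element of `Lspec n` is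
`max (max K) (2n/k₀)`. If no odd divisor of `n` has square exceeding `2n`,
then the largest element of `Lspec n` is `max K`. -/
theorem longest_decomposition (n : ℕ) (hn : 0 < n) :
    (∀ k₀ M : ℕ,
        IsLeast {k | k ∣ n ∧ Odd k ∧ 2 * n < k ^ 2} k₀ →
        IsGreatest {k | k ∣ n ∧ Odd k ∧ k ^ 2 < 2 * n} M →
        IsGreatest (Lspec n) (max M (2 * n / k₀))) ∧
      ((¬ ∃ k : ℕ, k ∣ n ∧ Odd k ∧ 2 * n < k ^ 2) →
        ∀ M : ℕ, IsGreatest {k | k ∣ n ∧ Odd k ∧ k ^ 2 < 2 * n} M →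
          IsGreatest (Lspec n) M) := by
  constructor
  · intro k₀ M hk hM
    obtain ⟨⟨a1, a2, a3⟩, hmin⟩ := hk
    obtain ⟨⟨b1, b2, b3⟩, hmax⟩ := hM
    constructor
    · rcases max_choice M (2 * n / k₀) with h | h <;> rw [h]
      · exact aux_odd n M b1 b2 b3
      · exact aux_even n k₀ hn a1 a2 a3
    · intro m hm
      rcases aux_cases n m hm with h | ⟨q, hq, h⟩
      · exact le_max_of_le_left (hmax h)
      · apply le_max_of_le_right
        rw [Nat.le_div_iff_mul_le a2.pos, ← h]
        exact Nat.mul_le_mul_left m (hmin hq)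
  · intro hno M hM
    obtain ⟨⟨b1, b2, b3⟩, hmax⟩ := hM
    refine ⟨aux_odd n M b1 b2 b3, ?_⟩
    intro m hm
    rcases aux_cases n m hm with h | ⟨q, hq, h⟩
    · exact hmax h
    · exact absurd ⟨q, hq⟩ hno
end
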